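/- Let n ≥ 2, p > 1, and real numbers α, β, γ satisfy the conditions with r = p: 1/p − γ/n > 0, 1/p − α/n > 0, 1 − β/n > 0, γ = (1+α)/p + ((p−1)/p²)β, and suppose 1 + α − β/p > 0. Then for every smooth compactly supported f : ℝ^n → ℝ, ∫_{ℝ^n} |f|^p |x|^{−γ p} dx ≤ (p/(n−γ p)) · (∫_{ℝ^n} |∇f|^p |x|^{−α p} dx)^{1/p} · (∫_{ℝ^n} |f|^p |x|^{−β} dx)^{(p−1)/p}. -/

import Mathlib

open Real MeasureTheory

lemma ckn_locInt (n : ℕ) (hn : 2 ≤ n) (s : ℝ) (hs : s < n) :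
    LocallyIntegrable (fun x : EuclideanSpace ℝ (Fin n) => ‖x‖ ^ (-s)) := by
  refine locallyIntegrable_of_norm_le_rpow (C := 1) (α := s) ?_ ?_ ?_ ?_
  · simp; omega
  · simpa using hs
  · refine Filter.Eventually.of_forall fun x => ?_
    rw [one_mul, Real.norm_of_nonneg (by positivity)]
  · exact (measurable_norm.pow_const _).aestronglyMeasurable

lemma ckn_int (n : ℕ) (hn : 2 ≤ n) (s : ℝ) (hs : s < n) (k : EuclideanSpace ℝ (Fin n) → ℝ)
    (hk : Continuous k) (hc : HasCompactSupport k) :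
    Integrable (fun x : EuclideanSpace ℝ (Fin n) => k x * ‖x‖ ^ (-s)) := by
  simpa using (ckn_locInt n hn s hs).integrable_smul_left_of_hasCompactSupport hk hc

lemma ckn_ibp (n : ℕ) (hn : 2 ≤ n) (s : ℝ) (hs : s < n) (g : EuclideanSpace ℝ (Fin n) → ℝ)
    (hg : ContDiff ℝ 1 g) (hc : HasCompactSupport g) :
    Integrable (fun x => fderiv ℝ g x x * ‖x‖ ^ (-s)) ∧
    ∫ x, fderiv ℝ g x x * ‖x‖ ^ (-s) = (s - n) * ∫ x, g x * ‖x‖ ^ (-s) := by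
  have hdc : Continuous (fderiv ℝ g) := hg.continuous_fderiv one_ne_zero
  have hcd : HasCompactSupport (fderiv ℝ g) := hc.fderiv ℝ
  obtain ⟨C, hC⟩ := hcd.exists_bound_of_continuous hdc
  obtain ⟨R, hR⟩ := hcd.isCompact.isBounded.subset_closedBall 0
  have hC0 : 0 ≤ C := (norm_nonneg _).trans (hC 0)
  have key := hasDerivAt_integral_of_dominated_loc_of_deriv_le (𝕜 := ℝ)
    (μ := (volume : Measure (EuclideanSpace ℝ (Fin n)))) (x₀ := (1:ℝ)) (s := Set.Ioo (1/2) 2)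
    (F := fun t x => g (t • x) * ‖x‖ ^ (-s)) (F' := fun t x => fderiv ℝ g (t • x) x * ‖x‖ ^ (-s))
    (bound := (Metric.closedBall 0 (2 * R)).indicator fun x => (C * (2 * R)) * ‖x‖ ^ (-s))
    (Ioo_mem_nhds (by norm_num) (by norm_num)) ?_ ?_ ?_ ?_ ?_ ?_
  · simp only [one_smul] at key
    refine ⟨key.1, ?_⟩
    have h2 : HasDerivAt (fun t : ℝ => t ^ (s - n) * ∫ x, g x * ‖x‖ ^ (-s))
        ((s - n) * ∫ x, g x * ‖x‖ ^ (-s)) 1 := by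
      simpa using (Real.hasDerivAt_rpow_const (x := 1) (p := s - n) (by simp)).mul_const
        (∫ x, g x * ‖x‖ ^ (-s))
    refine key.2.unique (h2.congr_of_eventuallyEq ?_)
    filter_upwards [Ioi_mem_nhds (show (0:ℝ) < 1 by norm_num)] with t (ht : 0 < t)
    have h3 := Measure.integral_comp_smul (volume : Measure (EuclideanSpace ℝ (Fin n)))
      (fun y => g y * ‖y‖ ^ (-s)) t
    have h4 : ∀ x : EuclideanSpace ℝ (Fin n), g (t • x) * ‖t • x‖ ^ (-s)
        = t ^ (-s) * (g (t • x) * ‖x‖ ^ (-s)) := fun x => by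
      rw [norm_smul, Real.norm_of_nonneg ht.le, Real.mul_rpow ht.le (norm_nonneg _)]; ring
    simp only [h4, integral_const_mul, finrank_euclideanSpace, Fintype.card_fin, smul_eq_mul] at h3
    rw [abs_of_pos (by positivity)] at h3
    have h5 : t ^ (s - n) = t ^ s * (t ^ n)⁻¹ := by
      rw [Real.rpow_sub ht, Real.rpow_natCast, div_eq_mul_inv]
    rw [h5, mul_assoc, ← h3, ← mul_assoc, ← Real.rpow_add ht]
    simp
  · refine Filter.Eventually.of_forall fun t => ?_
    exact ((hg.continuous.comp (continuous_const_smul t)).measurable.mul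
      (measurable_norm.pow_const _)).aestronglyMeasurable
  · simpa using ckn_int n hn s hs g hg.continuous hc
  · simp only [one_smul]
    exact ((hdc.clm_apply continuous_id).measurable.mul
      (measurable_norm.pow_const _)).aestronglyMeasurable
  · refine Filter.Eventually.of_forall fun x t ht => ?_
    by_cases hx : x ∈ Metric.closedBall (0 : EuclideanSpace ℝ (Fin n)) (2 * R)
    · rw [Set.indicator_of_mem hx, norm_mul, Real.norm_of_nonneg (r := ‖x‖ ^ (-s)) (by positivity)]
      gcongr
      refine (ContinuousLinearMap.le_opNorm _ _).trans ?_
      have := hC (t • x)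
      rw [mem_closedBall_zero_iff] at hx
      gcongr
    · rw [Set.indicator_of_notMem hx]
      have : fderiv ℝ g (t • x) = 0 := by
        by_contra h
        have h1 := hR (subset_tsupport _ h)
        rw [mem_closedBall_zero_iff, norm_smul, Real.norm_of_nonneg (by linarith [ht.1])] at h1
        apply hx
        rw [mem_closedBall_zero_iff]
        nlinarith [ht.1, norm_nonneg x]
      simp [this]
  · rw [integrable_indicator_iff measurableSet_closedBall]
    exact ((ckn_locInt n hn s hs).integrableOn_isCompact (isCompact_closedBall _ _)).const_mul _
  · refine Filter.Eventually.of_forall fun x t ht => ?_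
    have h1 : HasFDerivAt g (fderiv ℝ g (t • x)) (t • x) :=
      (hg.differentiable one_ne_zero _).hasFDerivAt
    have h2 : HasDerivAt (fun t : ℝ => t • x) x t := by
      simpa using (hasDerivAt_id t).smul_const x
    exact (h1.comp_hasDerivAt t h2).mul_const _

/-- The case `r = p` of the sharp CKN inequality on ℝⁿ. -/
theorem ckn_r_eq_p
    (n : ℕ) (hn : 2 ≤ n) (p α β γ : ℝ) (hp : 1 < p)
    (h1 : 0 < 1/p - γ/n) (h2 : 0 < 1/p - α/n) (h3 : 0 < 1 - β/n)
    (hbal : γ = (1+α)/p + ((p-1)/p^2) * β)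
    (hσ : 0 < 1 + α - β/p)
    (f : EuclideanSpace ℝ (Fin n) → ℝ) (hf : ContDiff ℝ (⊤ : ℕ∞) f)
    (hsupp : HasCompactSupport f) :
    ∫ x : EuclideanSpace ℝ (Fin n), |f x| ^ p * ‖x‖ ^ (-(γ * p)) ≤
      (p / (n - γ * p)) *
        (∫ x : EuclideanSpace ℝ (Fin n), ‖gradient f x‖ ^ p * ‖x‖ ^ (-(α * p))) ^ (1/p) *
        (∫ x : EuclideanSpace ℝ (Fin n), |f x| ^ p * ‖x‖ ^ (-β)) ^ ((p-1)/p) := by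
  have hp0 : 0 < p := by linarith
  have hp1 : 0 < p - 1 := by linarith
  have hn0 : (0:ℝ) < n := by positivity
  have hγ : γ * p < n := by
    rw [sub_pos, div_lt_div_iff₀ hn0 hp0] at h1; linarith
  have hα : α * p < n := by
    rw [sub_pos, div_lt_div_iff₀ hn0 hp0] at h2; linarith
  have hβ : β < n := by
    rw [sub_pos, div_lt_one hn0] at h3; exact h3
  have hbal' : -(γ * p) + 1 = -α + -(β * (p - 1) / p) := by
    rw [hbal]; field_simp; ring
  have hgrad : ∀ x, ‖gradient f x‖ = ‖fderiv ℝ f x‖ := fun x => by simp [gradient]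
  simp only [hgrad]
  have hf1 : ContDiff ℝ 1 f := hf.of_le (by exact_mod_cast le_top)
  have hdc : Continuous (fderiv ℝ f) := hf1.continuous_fderiv one_ne_zero
  have hcd : HasCompactSupport (fderiv ℝ f) := hsupp.fderiv ℝ
  have hgc : HasCompactSupport fun x => ‖f x‖ ^ p :=
    hsupp.comp_left (g := fun y : ℝ => ‖y‖ ^ p) (by simp [hp0.ne'])
  have hg : ContDiff ℝ 1 fun x => ‖f x‖ ^ p := hf1.norm_rpow hp
  obtain ⟨hI, hibp⟩ := ckn_ibp n hn (γ * p) hγ _ hg hgc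
  -- the two factors for the Holder inequality
  have hpq : p.HolderConjugate (p / (p - 1)) := Real.HolderConjugate.conjExponent hp
  have hAeq : ∀ x : EuclideanSpace ℝ (Fin n), (‖fderiv ℝ f x‖ * ‖x‖ ^ (-α)) ^ p
      = ‖fderiv ℝ f x‖ ^ p * ‖x‖ ^ (-(α * p)) := fun x => by
    rw [Real.mul_rpow (by positivity) (by positivity), ← Real.rpow_mul (by positivity), neg_mul]
  have hBeq : ∀ x : EuclideanSpace ℝ (Fin n),
      (|f x| ^ (p - 1) * ‖x‖ ^ (-(β * (p - 1) / p))) ^ (p / (p - 1))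
      = |f x| ^ p * ‖x‖ ^ (-β) := fun x => by
    rw [Real.mul_rpow (by positivity) (by positivity), ← Real.rpow_mul (by positivity),
      ← Real.rpow_mul (by positivity)]
    congr 2 <;> field_simp
  have hAint : Integrable fun x : EuclideanSpace ℝ (Fin n) =>
      ‖fderiv ℝ f x‖ ^ p * ‖x‖ ^ (-(α * p)) :=
    ckn_int n hn _ hα _ (hdc.norm.rpow_const fun _ => Or.inr hp0.le)
      (hcd.comp_left (g := fun y => ‖y‖ ^ p) (by simp [hp0.ne']))
  have hBint : Integrable fun x : EuclideanSpace ℝ (Fin n) => |f x| ^ p * ‖x‖ ^ (-β) :=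
    ckn_int n hn _ hβ _ hg.continuous hgc
  have hAL : MemLp (fun x : EuclideanSpace ℝ (Fin n) => ‖fderiv ℝ f x‖ * ‖x‖ ^ (-α))
      (ENNReal.ofReal p) := by
    have hm : AEStronglyMeasurable (fun x : EuclideanSpace ℝ (Fin n) =>
        ‖fderiv ℝ f x‖ * ‖x‖ ^ (-α)) volume := (hdc.norm.measurable.mul
      (measurable_norm.pow_const _)).aestronglyMeasurable
    rw [← integrable_norm_rpow_iff hm (by simpa using hp0) (by simp)]
    refine hAint.congr (Filter.Eventually.of_forall fun x => ?_)
    simp only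
    rw [ENNReal.toReal_ofReal hp0.le, Real.norm_of_nonneg (by positivity), hAeq]
  have hq0 : 0 < p / (p - 1) := by positivity
  have hBL : MemLp (fun x : EuclideanSpace ℝ (Fin n) =>
      |f x| ^ (p - 1) * ‖x‖ ^ (-(β * (p - 1) / p))) (ENNReal.ofReal (p / (p - 1))) := by
    have hm : AEStronglyMeasurable (fun x : EuclideanSpace ℝ (Fin n) =>
        |f x| ^ (p - 1) * ‖x‖ ^ (-(β * (p - 1) / p))) volume :=
      ((hf.continuous.abs.measurable.pow_const _).mul
      (measurable_norm.pow_const _)).aestronglyMeasurable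
    rw [← integrable_norm_rpow_iff hm (by simpa [hp0, hp1] using hq0) (by simp)]
    refine hBint.congr (Filter.Eventually.of_forall fun x => ?_)
    simp only
    rw [ENNReal.toReal_ofReal hq0.le, Real.norm_of_nonneg (by positivity), hBeq]
  have hH := integral_mul_le_Lp_mul_Lq_of_nonneg hpq
    (Filter.Eventually.of_forall fun x => by simp only [Pi.zero_apply]; positivity)
    (Filter.Eventually.of_forall fun x => by simp only [Pi.zero_apply]; positivity) hAL hBL
  simp only [hAeq, hBeq] at hH
  rw [show 1 / (p / (p - 1)) = (p - 1) / p by field_simp] at hH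
  have hpq' : (ENNReal.ofReal p).HolderConjugate (ENNReal.ofReal (p / (p - 1))) :=
    hpq.ennrealOfReal
  have hABint := hAL.integrable_mul hBL
  have hne : ∀ᵐ x : EuclideanSpace ℝ (Fin n), x ≠ 0 := by
    have : Nonempty (Fin n) := ⟨⟨0, by omega⟩⟩
    exact Measure.ae_ne volume 0
  have hmain : (n - γ * p) * ∫ x : EuclideanSpace ℝ (Fin n), |f x| ^ p * ‖x‖ ^ (-(γ * p)) ≤
      p * ∫ x : EuclideanSpace ℝ (Fin n), (‖fderiv ℝ f x‖ * ‖x‖ ^ (-α)) *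
        (|f x| ^ (p - 1) * ‖x‖ ^ (-(β * (p - 1) / p))) := by
    have e : (n - γ * p) * ∫ x : EuclideanSpace ℝ (Fin n), |f x| ^ p * ‖x‖ ^ (-(γ * p)) =
        ∫ x, -(fderiv ℝ (fun x => ‖f x‖ ^ p) x x * ‖x‖ ^ (-(γ * p))) := by
      rw [integral_neg, hibp]; simp only [Real.norm_eq_abs]; ring
    rw [e, ← integral_const_mul]
    refine integral_mono_ae hI.neg ?_ ?_
    · exact hABint.const_mul p
    filter_upwards [hne] with x hx
    have hx0 : 0 < ‖x‖ := norm_pos_iff.2 hx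
    have b1 := norm_fderiv_norm_rpow_le (hf1.differentiable one_ne_zero) (x := x) hp
    have b2 : -(fderiv ℝ (fun x => ‖f x‖ ^ p) x x) ≤
        p * ‖f x‖ ^ (p - 1) * ‖fderiv ℝ f x‖ * ‖x‖ := by
      refine (neg_le_abs _).trans ?_
      rw [← Real.norm_eq_abs]
      refine (ContinuousLinearMap.le_opNorm _ _).trans ?_
      gcongr
    calc -(fderiv ℝ (fun x => ‖f x‖ ^ p) x x * ‖x‖ ^ (-(γ * p)))
        = -(fderiv ℝ (fun x => ‖f x‖ ^ p) x x) * ‖x‖ ^ (-(γ * p)) := by ring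
      _ ≤ p * ‖f x‖ ^ (p - 1) * ‖fderiv ℝ f x‖ * ‖x‖ * ‖x‖ ^ (-(γ * p)) := by gcongr
      _ = p * ‖f x‖ ^ (p - 1) * ‖fderiv ℝ f x‖ * ‖x‖ ^ (-(γ * p) + 1) := by
        rw [Real.rpow_add_one hx0.ne']; ring
      _ = _ := by
        rw [hbal', Real.rpow_add hx0, Real.norm_eq_abs]; ring
  have hd : 0 < n - γ * p := by linarith
  rw [mul_assoc, div_mul_eq_mul_div, le_div_iff₀ hd, mul_comm]
  exact hmain.trans (by gcongr)
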